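/- arXiv:1404.0455 — 2 statements merged into one kernel-verified Lean document; each statement's English description precedes it below -/
import Mathlib

section
/- Let ξ be irrational, and let S = {(t,y) ∈ ℝ² : a ≤ ξt − y ≤ b} be a strip with irrational slope ξ, with a < b < a + 1. The cut-and-project set Z = {t ∈ ℤ : ∃ y ∈ ℤ, a ≤ ξt − y ≤ b} is BD-equivalent to a lattice in ℝ if and only if b − a ≡ kξ mod ℤ for some integer k. -/
/-- Two subsets of ℝ are bounded-displacement (BD) equivalent if there is a
bijection between them moving every point a uniformly bounded distance. -/
def BDEquiv (Y₁ Y₂ : Set ℝ) : Prop :=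
  ∃ φ : Y₁ ≃ Y₂, ∃ M : ℝ, ∀ y : Y₁, |(y : ℝ) - (φ y : ℝ)| ≤ M

/-!
Everything is read off from Birkhoff sums along the translation `t ↦ t + 1` of `ℤ`, on which
membership in `Z` is the coding `t ↦ ξt` of the rotation by `ξ`.

A bounded-displacement bijection from `Z ⊆ ℤ` to `αℤ` exists iff the Birkhoff sums of `1_Z - α⁻¹`
are bounded: a bijection controls the number of points in every window, and conversely a bounded
solution `h` of `h (t + 1) - h t = 1_Z t - α⁻¹` makes `t ↦ ⌊h t + t / α⌋` an enumeration of `Z`.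

Since `ξ` is irrational, the orbits `ξt mod 1` are dense, and right continuity lets us pass from
the orbit of `0` to all orbits of the rotation. Bounded sums for the counting function `F` of an
interval then force its mean to be `α⁻¹`, and the upper limit `ψ` of these sums satisfies
`ψ (y + ξ) = ψ y - F y + α⁻¹`. As `F` is integer-valued, `exp (2πiψ)` is an eigenfunction of the
rotation with eigenvalue `exp (2πi / α)`, so `α⁻¹ ∈ ℤξ + ℤ`. Conversely, for an interval of length
`kξ + m`, the function `F - (kξ + m)` is a difference of values of `Int.fract` at two points of one
orbit, whose sums telescope.
-/

open Filter Function MeasureTheory Real Set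
open scoped Topology

/-- Bounded discrepancy: the Birkhoff sums of `f` along the orbits of `T` are bounded uniformly
in the starting point and in the length. -/
def HasBoundedBirkhoffSums {X : Type*} (T : X → X) (f : X → ℝ) : Prop :=
  ∃ K : ℝ, ∀ (n : ℕ) (x : X), |birkhoffSum T f n x| ≤ K

/-- The upper limit of the Birkhoff sums of `f`. Where these are bounded, its negative is a
transfer function: it solves the cohomological equation `h ∘ T - h = f`. -/
noncomputable def birkhoffLimsup {X : Type*} (T : X → X) (f : X → ℝ) (x : X) : ℝ :=
  limsup (fun n => birkhoffSum T f n x) atTop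

section BirkhoffSums

variable {X Y : Type*} {T : X → X} {f g : X → ℝ}

theorem birkhoffSum_comp_of_semiconj {S : Y → Y} {p : Y → X} (h : Semiconj p S T) (n : ℕ)
    (y : Y) : birkhoffSum S (f ∘ p) n y = birkhoffSum T f n (p y) :=
  Finset.sum_congr rfl fun i _ => congrArg f ((h.iterate_right i).eq y)

theorem periodic_birkhoffSum_add_right {ξ p : ℝ} {f : ℝ → ℝ} (hf : Periodic f p) (n : ℕ) :
    Periodic (birkhoffSum (· + ξ) f n) p := fun x => by
  have shift : Semiconj (· + p) (· + ξ) (· + ξ) := fun y => add_right_comm y ξ p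
  rw [← birkhoffSum_comp_of_semiconj shift, show f ∘ (· + p) = f from funext hf]

theorem measurable_birkhoffSum [MeasurableSpace X] (hT : Measurable T) (hf : Measurable f)
    (n : ℕ) : Measurable (birkhoffSum T f n) :=
  Finset.measurable_sum _ fun i _ => hf.comp (hT.iterate i)

theorem measurable_birkhoffLimsup [MeasurableSpace X] (hT : Measurable T) (hf : Measurable f) :
    Measurable (birkhoffLimsup T f) :=
  .limsup fun n => measurable_birkhoffSum hT hf n

theorem periodic_birkhoffLimsup_add_right {ξ p : ℝ} {f : ℝ → ℝ} (hf : Periodic f p) :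
    Periodic (birkhoffLimsup (· + ξ) f) p := fun x => by
  simp only [birkhoffLimsup, periodic_birkhoffSum_add_right hf _ x]

theorem isBoundedUnder_birkhoffSum {K : ℝ} (hK : ∀ n x, |birkhoffSum T f n x| ≤ K) (x : X) :
    IsBoundedUnder (· ≤ ·) atTop (fun n => birkhoffSum T f n x) ∧
      IsBoundedUnder (· ≥ ·) atTop fun n => birkhoffSum T f n x :=
  isBoundedUnder_le_abs.1 (isBoundedUnder_of ⟨K, fun n => hK n x⟩)

theorem birkhoffLimsup_eq_add {K : ℝ} (hK : ∀ n x, |birkhoffSum T f n x| ≤ K) (x : X) :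
    birkhoffLimsup T f x = f x + birkhoffLimsup T f (T x) := by
  obtain ⟨above, below⟩ := isBoundedUnder_birkhoffSum hK (T x)
  calc birkhoffLimsup T f x
      = limsup (fun n => birkhoffSum T f (n + 1) x) atTop := (limsup_nat_add _ 1).symm
    _ = limsup (fun n => f x + birkhoffSum T f n (T x)) atTop := by simp only [birkhoffSum_succ']
    _ = f x + birkhoffLimsup T f (T x) := limsup_const_add _ _ _ above below.isCoboundedUnder_le

theorem abs_birkhoffLimsup_le {K : ℝ} (hK : ∀ n x, |birkhoffSum T f n x| ≤ K) (x : X) :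
    |birkhoffLimsup T f x| ≤ K := by
  obtain ⟨above, below⟩ := isBoundedUnder_birkhoffSum hK x
  refine abs_le.2 ⟨?_, ?_⟩
  · exact le_limsup_of_frequently_le (.of_forall fun n => (abs_le.1 (hK n x)).1) above
  · exact limsup_le_of_le below.isCoboundedUnder_le (.of_forall fun n => (abs_le.1 (hK n x)).2)

/-- A Gottschalk–Hedlund theorem without topology. -/
theorem hasBoundedBirkhoffSums_iff_exists_transfer :
    HasBoundedBirkhoffSums T f ↔
      ∃ h : X → ℝ, (∃ B, ∀ x, |h x| ≤ B) ∧ ∀ x, h (T x) - h x = f x := by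
  constructor
  · rintro ⟨K, hK⟩
    refine ⟨fun x => -birkhoffLimsup T f x, ⟨K, fun x => ?_⟩, fun x => ?_⟩
    · simpa only [abs_neg] using abs_birkhoffLimsup_le hK x
    · linarith [birkhoffLimsup_eq_add hK x]
  · rintro ⟨h, ⟨B, hB⟩, transfer⟩
    refine ⟨B + B, fun n x => ?_⟩
    have telescope : birkhoffSum T f n x = h (T^[n] x) - h x := by
      simp only [birkhoffSum, ← transfer, ← iterate_succ_apply']
      exact Finset.sum_range_sub (fun i => h (T^[i] x)) n
    rw [telescope]
    exact (abs_sub _ _).trans (add_le_add (hB _) (hB _))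

theorem hasBoundedBirkhoffSums_iterate_sub (hg : ∃ B, ∀ x, |g x| ≤ B) (k : ℕ) :
    HasBoundedBirkhoffSums T fun x => g (T^[k] x) - g x := by
  obtain ⟨B, hB⟩ := hg
  refine hasBoundedBirkhoffSums_iff_exists_transfer.2
    ⟨birkhoffSum T g k, ⟨k * B, fun x => ?_⟩, birkhoffSum_apply_sub_birkhoffSum T g k⟩
  calc |birkhoffSum T g k x| ≤ ∑ i ∈ Finset.range k, |g (T^[i] x)| :=
        Finset.abs_sum_le_sum_abs _ _
    _ ≤ ∑ _i ∈ Finset.range k, B := Finset.sum_le_sum fun i _ => hB _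
    _ = k * B := by simp

theorem HasBoundedBirkhoffSums.neg (hf : HasBoundedBirkhoffSums T f) :
    HasBoundedBirkhoffSums T (-f) := by
  simpa only [HasBoundedBirkhoffSums, birkhoffSum_neg, abs_neg] using hf

theorem HasBoundedBirkhoffSums.add (hf : HasBoundedBirkhoffSums T f)
    (hg : HasBoundedBirkhoffSums T g) : HasBoundedBirkhoffSums T (f + g) := by
  obtain ⟨K, hK⟩ := hf
  obtain ⟨L, hL⟩ := hg
  refine ⟨K + L, fun n x => ?_⟩
  rw [birkhoffSum_add']
  exact (abs_add_le _ _).trans (add_le_add (hK n x) (hL n x))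

theorem HasBoundedBirkhoffSums.add_iff (hg : HasBoundedBirkhoffSums T g) :
    HasBoundedBirkhoffSums T (f + g) ↔ HasBoundedBirkhoffSums T f :=
  ⟨fun h => by simpa only [add_neg_cancel_right] using h.add hg.neg, fun h => h.add hg⟩

end BirkhoffSums

/-! ### Rotations of the circle -/

theorem dense_int_mul_add_int {ξ : ℝ} (hξ : Irrational ξ) :
    Dense {y : ℝ | ∃ t m : ℤ, y = ξ * t + m} := by
  convert (dense_addSubgroupClosure_pair_iff (a := ξ) (b := 1)).2 (by simpa using hξ) using 1
  ext y
  simp only [mem_ofPred_eq, SetLike.mem_coe, AddSubgroup.mem_closure_pair, zsmul_eq_mul, mul_one,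
    mul_comm ξ, eq_comm]

theorem le_of_dense_of_continuousWithinAt_Ioi {D : Set ℝ} (hD : Dense D) {f : ℝ → ℝ} {K x : ℝ}
    (hf : ContinuousWithinAt f (Ioi x) x) (hK : ∀ y ∈ D, f y ≤ K) : f x ≤ K := by
  have hx : x ∈ closure (Ioi x ∩ D) :=
    closure_minimal (hD.open_subset_closure_inter isOpen_Ioi) isClosed_closure (by simp)
  exact (hf.mono inter_subset_left).closure_le hx continuousWithinAt_const fun y hy => hK y hy.2

theorem continuousWithinAt_birkhoffSum_add_right {ξ : ℝ} {f : ℝ → ℝ}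
    (hf : ∀ x, ContinuousWithinAt f (Ioi x) x) (n : ℕ) (x : ℝ) :
    ContinuousWithinAt (birkhoffSum (· + ξ) f n) (Ioi x) x := by
  refine tendsto_finsetSum _ fun i _ => ?_
  simp only [add_right_iterate]
  exact (hf _).comp (by fun_prop) fun y hy => add_lt_add_left (mem_Ioi.1 hy) (i • ξ)

theorem hasBoundedBirkhoffSums_comp_mul_iff {ξ : ℝ} (hξ : Irrational ξ) {f : ℝ → ℝ}
    (hper : Periodic f 1) (hf : ∀ x, ContinuousWithinAt f (Ioi x) x) :
    HasBoundedBirkhoffSums (· + 1) (fun t : ℤ => f (ξ * t)) ↔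
      HasBoundedBirkhoffSums (· + ξ) f := by
  have orbit (n : ℕ) (t : ℤ) : birkhoffSum (· + 1) (fun t : ℤ => f (ξ * t)) n t =
      birkhoffSum (· + ξ) f n (ξ * t) :=
    birkhoffSum_comp_of_semiconj (p := fun t : ℤ => ξ * t) (fun t => by push_cast; ring) n t
  constructor
  · rintro ⟨K, hK⟩
    refine ⟨K, fun n x => le_of_dense_of_continuousWithinAt_Ioi
      (f := fun x => |birkhoffSum (· + ξ) f n x|) (dense_int_mul_add_int hξ)
      (continuousWithinAt_birkhoffSum_add_right hf n x).abs ?_⟩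
    rintro _ ⟨t, m, rfl⟩
    have shift := (periodic_birkhoffSum_add_right (ξ := ξ) hper n).int_mul m (ξ * t)
    rw [mul_one] at shift
    simpa only [shift, orbit] using hK n t
  · rintro ⟨K, hK⟩
    exact ⟨K, fun n t => by rw [orbit]; exact hK n _⟩

theorem intervalIntegral_comp_add_right_of_periodic {E : Type*} [NormedAddCommGroup E]
    [NormedSpace ℝ E] {a b : ℝ} {f : ℝ → E} (hf : Periodic f (b - a)) (s : ℝ) :
    ∫ x in a..b, f (x + s) = ∫ x in a..b, f x := by
  have := hf.intervalIntegral_add_eq (a + s) a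
  rw [intervalIntegral.integral_comp_add_right]
  simpa only [show a + s + (b - a) = b + s by ring, add_sub_cancel] using this

theorem fourierCoeffOn_comp_add_right {E : Type*} [NormedAddCommGroup E] [NormedSpace ℂ E]
    {a b : ℝ} (hab : a < b) {f : ℝ → E} (hf : Periodic f (b - a)) (s : ℝ) (n : ℤ) :
    fourierCoeffOn hab (fun x => f (x + s)) n =
      fourier n (s : AddCircle (b - a)) • fourierCoeffOn hab f n := by
  set q : ℝ → E := fun x => fourier (-n) (x : AddCircle (b - a)) • f x with hq
  have q_periodic : Periodic q (b - a) := fun x => by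
    simp only [hq, hf x, AddCircle.coe_add_period]
  have shift (x : ℝ) : fourier (-n) (x : AddCircle (b - a)) • f (x + s) =
      fourier n (s : AddCircle (b - a)) • q (x + s) := by
    have split : fourier (-n) (x : AddCircle (b - a)) = fourier n (s : AddCircle (b - a)) *
        fourier (-n) ((x + s : ℝ) : AddCircle (b - a)) := by
      simp only [fourier_apply, ← Circle.coe_mul, ← AddCircle.toCircle_add, AddCircle.coe_add]
      congr 2
      module
    simp only [hq]
    rw [smul_smul, split]
  rw [fourierCoeffOn_eq_integral, fourierCoeffOn_eq_integral]
  simp only [shift, intervalIntegral.integral_smul,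
    intervalIntegral_comp_add_right_of_periodic q_periodic]
  rw [smul_comm]

theorem exists_eq_fourier_of_comp_add_right_eq_mul {a b : ℝ} (hab : a < b) {g : ℝ → ℂ}
    (hper : Periodic g (b - a)) (hL2 : MemLp g 2 (volume.restrict (Ioc a b)))
    (hne : ∫ x in a..b, ‖g x‖ ^ 2 ≠ 0) {ξ : ℝ} {z : ℂ} (hz : ∀ x, g (x + ξ) = z * g x) :
    ∃ k : ℤ, z = fourier k (ξ : AddCircle (b - a)) := by
  obtain ⟨k, hk⟩ : ∃ k, fourierCoeffOn hab g k ≠ 0 := by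
    by_contra! hzero
    have parseval := tsum_sq_fourierCoeffOn hab hL2
    simp only [hzero, norm_zero, ne_eq, OfNat.ofNat_ne_zero, not_false_eq_true, zero_pow,
      tsum_zero, smul_eq_mul] at parseval
    exact mul_ne_zero (inv_ne_zero (sub_pos.2 hab).ne') hne parseval.symm
  refine ⟨k, mul_right_cancel₀ hk ?_⟩
  rw [← fourierCoeffOn.const_mul, ← smul_eq_mul, ← fourierCoeffOn_comp_add_right hab hper]
  simp only [hz]

/-! ### Intervals of bounded discrepancy -/

section BoundedDiscrepancy

variable {ξ : ℝ}

theorem intervalIntegral_eq_zero_of_hasBoundedBirkhoffSums {a b : ℝ} {f : ℝ → ℝ}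
    (hf : Measurable f) (hper : Periodic f (b - a)) (h : HasBoundedBirkhoffSums (· + ξ) f) :
    ∫ x in a..b, f x = 0 := by
  obtain ⟨K, hK⟩ := h
  set ψ := birkhoffLimsup (· + ξ) f
  have ψ_measurable : Measurable ψ := measurable_birkhoffLimsup (measurable_add_const ξ) hf
  have ψ_integrable (s : ℝ) : IntervalIntegrable (fun x => ψ (x + s)) volume a b :=
    (intervalIntegrable_const (c := K)).mono_fun'
      (ψ_measurable.comp (measurable_add_const s)).aestronglyMeasurable
      (.of_forall fun x => abs_birkhoffLimsup_le hK (x + s))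
  calc ∫ x in a..b, f x = ∫ x in a..b, (ψ (x + 0) - ψ (x + ξ)) := by
        refine intervalIntegral.integral_congr fun x _ => ?_
        simp only [add_zero]
        exact eq_sub_of_add_eq (birkhoffLimsup_eq_add hK x).symm
    _ = 0 := by
        rw [intervalIntegral.integral_sub (ψ_integrable 0) (ψ_integrable ξ)]
        simp only [intervalIntegral_comp_add_right_of_periodic
          (periodic_birkhoffLimsup_add_right hper), ψ, sub_self]

theorem exists_eq_int_mul_add_int_of_hasBoundedBirkhoffSums {F : ℝ → ℤ} (hF : Measurable F)
    (hper : Periodic F 1) {c : ℝ} (h : HasBoundedBirkhoffSums (· + ξ) fun x => F x - c) :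
    ∃ k m : ℤ, c = k * ξ + m := by
  obtain ⟨K, hK⟩ := h
  set ψ := birkhoffLimsup (· + ξ) fun x => F x - c
  have ψ_measurable : Measurable ψ := measurable_birkhoffLimsup (measurable_add_const ξ)
    ((measurable_from_top.comp hF).sub_const c)
  have ψ_periodic : Periodic ψ (1 - 0) :=
    periodic_birkhoffLimsup_add_right fun x => by rw [sub_zero, hper x]
  set g : ℝ → ℂ := fun x => Circle.exp (2 * π * ψ x)
  have g_eigen (x : ℝ) : g (x + ξ) = Circle.exp (2 * π * c) * g x := by
    have cocycle : 2 * π * c + 2 * π * ψ x = F x * (2 * π) + 2 * π * ψ (x + ξ) := by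
      rw [show ψ x = F x - c + ψ (x + ξ) from birkhoffLimsup_eq_add hK x]
      ring
    rw [← Circle.coe_mul, ← Circle.exp_add, cocycle, Circle.exp_add, Circle.exp_int_mul_two_pi,
      one_mul]
  have g_memLp : MemLp g 2 (volume.restrict (Ioc 0 1)) := by
    have g_measurable : Measurable g := by
      simp only [g, Circle.coe_exp]
      fun_prop
    exact .of_bound g_measurable.aestronglyMeasurable 1
      (.of_forall fun x => (Circle.norm_coe _).le)
  obtain ⟨k, hk⟩ := exists_eq_fourier_of_comp_add_right_eq_mul one_pos
    (fun x => by simp only [g, ψ_periodic x]) g_memLp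
    (by simp only [g, Circle.norm_coe]; norm_num) g_eigen
  rw [fourier_apply, ← AddCircle.coe_zsmul, AddCircle.toCircle_apply_mk, Circle.coe_inj,
    Circle.exp_eq_exp] at hk
  obtain ⟨m, hm⟩ := hk
  refine ⟨k, m, mul_left_cancel₀ two_pi_pos.ne' ?_⟩
  rw [hm, zsmul_eq_mul]
  ring

/-- The number of integers `n` such that `y - n` lies in `[a, b)`, when `a ≤ b`. The formula makes
sense for all `a` and `b` and is additive in the interval. -/
noncomputable def icoShiftCount (a b y : ℝ) : ℤ := ⌊y - a⌋ - ⌊y - b⌋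

theorem coe_icoShiftCount (a b y : ℝ) :
    (icoShiftCount a b y : ℝ) = b - a + (Int.fract (y - b) - Int.fract (y - a)) := by
  simp only [icoShiftCount, Int.fract]
  push_cast
  ring

theorem measurable_icoShiftCount (a b : ℝ) : Measurable (icoShiftCount a b) :=
  (measurable_id.sub_const a).floor.sub (measurable_id.sub_const b).floor

theorem periodic_icoShiftCount (a b : ℝ) : Periodic (icoShiftCount a b) 1 := fun y => by
  simp only [icoShiftCount, add_sub_right_comm, Int.floor_add_one]
  ring

theorem continuousWithinAt_floor_sub (a x : ℝ) :
    ContinuousWithinAt (fun y => (⌊y - a⌋ : ℝ)) (Ioi x) x := by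
  have right : Tendsto (fun y => y - a) (𝓝[>] x) (𝓝[≥] (x - a)) :=
    tendsto_nhdsWithin_of_tendsto_nhds_of_eventually_within _
      ((continuous_sub_right a).continuousWithinAt) <|
      eventually_nhdsWithin_of_forall fun y hy => sub_le_sub_right (le_of_lt hy) a
  exact (tendsto_pure_nhds _ _).comp ((tendsto_floor_right_pure_floor _).comp right)

theorem continuousWithinAt_icoShiftCount_sub (a b c x : ℝ) :
    ContinuousWithinAt (fun y => (icoShiftCount a b y : ℝ) - c) (Ioi x) x := by
  simp only [icoShiftCount, Int.cast_sub]
  exact ((continuousWithinAt_floor_sub a x).sub (continuousWithinAt_floor_sub b x)).sub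
    continuousWithinAt_const

theorem intervalIntegral_icoShiftCount_sub (a b c : ℝ) :
    ∫ y in (0 : ℝ)..1, ((icoShiftCount a b y : ℝ) - c) = b - a - c := by
  have fract_integrable (s : ℝ) :
      IntervalIntegrable (fun y => Int.fract (y - s)) volume 0 1 :=
    (intervalIntegrable_const (c := (1 : ℝ))).mono_fun'
      (measurable_id.sub_const s).fract.aestronglyMeasurable
      (.of_forall fun y => by
        simpa only [norm_eq_abs, Int.abs_fract] using (Int.fract_lt_one _).le)
  have shift (s : ℝ) : ∫ y in (0 : ℝ)..1, Int.fract (y - s) = ∫ y in (0 : ℝ)..1, Int.fract y :=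
    intervalIntegral_comp_add_right_of_periodic
      (by rw [sub_zero]; exact Int.fract_periodic ℝ) (-s)
  simp only [coe_icoShiftCount, add_sub_right_comm _ _ c]
  rw [intervalIntegral.integral_add intervalIntegrable_const
      ((fract_integrable b).sub (fract_integrable a)),
    intervalIntegral.integral_sub (fract_integrable b) (fract_integrable a), shift, shift]
  simp

/-- Hecke's theorem. -/
theorem hasBoundedBirkhoffSums_icoShiftCount (a : ℝ) (k m : ℤ) :
    HasBoundedBirkhoffSums (· + ξ)
      fun y => icoShiftCount a (a + (k * ξ + m)) y - (k * ξ + m) := by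
  have fract_bounded (s : ℝ) : ∃ B, ∀ x : ℝ, |Int.fract (x - s)| ≤ B :=
    ⟨1, fun x => by simpa only [Int.abs_fract] using (Int.fract_lt_one _).le⟩
  obtain ⟨j, rfl | rfl⟩ := k.eq_nat_or_neg
  · convert (hasBoundedBirkhoffSums_iterate_sub (T := (· + ξ))
      (fract_bounded (a + (j * ξ + m))) j).neg using 1
    ext y
    simp only [coe_icoShiftCount, add_right_iterate, Pi.neg_apply, Int.cast_natCast, nsmul_eq_mul]
    rw [show y - a = y + j * ξ - (a + (j * ξ + m)) + m by ring, Int.fract_add_intCast]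
    ring
  · convert hasBoundedBirkhoffSums_iterate_sub (T := (· + ξ)) (fract_bounded a) j using 1
    ext y
    simp only [coe_icoShiftCount, add_right_iterate, nsmul_eq_mul]
    push_cast
    rw [show y - (a + (-j * ξ + m)) = y + j * ξ - a - m by ring, Int.fract_sub_intCast]
    ring

/-- Kesten's theorem, together with its converse due to Hecke. -/
theorem hasBoundedBirkhoffSums_icoShiftCount_sub_iff (a b c : ℝ) :
    HasBoundedBirkhoffSums (· + ξ) (fun y => icoShiftCount a b y - c) ↔
      c = b - a ∧ ∃ k m : ℤ, b - a = k * ξ + m := by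
  constructor
  · intro h
    have c_eq : b - a = c := by
      rw [← sub_eq_zero, ← intervalIntegral_icoShiftCount_sub]
      refine intervalIntegral_eq_zero_of_hasBoundedBirkhoffSums
        ((measurable_from_top.comp (measurable_icoShiftCount a b)).sub_const c) (fun y => ?_) h
      rw [sub_zero, periodic_icoShiftCount a b y]
    refine ⟨c_eq.symm, c_eq ▸ ?_⟩
    exact exists_eq_int_mul_add_int_of_hasBoundedBirkhoffSums (measurable_icoShiftCount a b)
      (periodic_icoShiftCount a b) h
  · rintro ⟨rfl, k, m, hkm⟩
    simpa only [← hkm, add_sub_cancel] using hasBoundedBirkhoffSums_icoShiftCount (ξ := ξ) a k m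

end BoundedDiscrepancy

/-! ### Cut-and-project sets -/

/-- The cut-and-project set of the strip `a ≤ ξt − y ≤ b`, as a set of integers `t`. -/
def cutAndProject (ξ a b : ℝ) : Set ℤ :=
  {t | ∃ y : ℤ, a ≤ ξ * t - y ∧ ξ * t - y ≤ b}

theorem icoShiftCount_eq_indicator {a b : ℝ} (hab : a ≤ b) (hb : b < a + 1) (x : ℝ) :
    (icoShiftCount a b x : ℝ) = {x : ℝ | ∃ n : ℤ, x - n ∈ Ico a b}.indicator 1 x := by
  have mem_iff : x ∈ {x : ℝ | ∃ n : ℤ, x - n ∈ Ico a b} ↔ ⌊x - b⌋ < ⌊x - a⌋ := by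
    constructor
    · rintro ⟨n, han, hnb⟩
      exact (Int.floor_lt.2 (sub_lt_comm.1 hnb)).trans_le (Int.le_floor.2 (le_sub_comm.1 han))
    · intro h
      exact ⟨⌊x - a⌋, le_sub_comm.1 (Int.floor_le _), sub_lt_comm.1 (Int.floor_lt.1 h)⟩
  have floor_mono : ⌊x - b⌋ ≤ ⌊x - a⌋ := Int.floor_mono (sub_le_sub_left hab x)
  have floor_lt : ⌊x - a⌋ < ⌊x - b⌋ + 2 := by
    rw [Int.floor_lt]
    push_cast
    linarith [Int.lt_floor_add_one (x - b)]
  by_cases h : x ∈ {x : ℝ | ∃ n : ℤ, x - n ∈ Ico a b}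
  · rw [indicator_of_mem h, icoShiftCount,
      show ⌊x - a⌋ = ⌊x - b⌋ + 1 by have := mem_iff.1 h; omega]
    simp
  · rw [indicator_of_notMem h, icoShiftCount,
      show ⌊x - a⌋ = ⌊x - b⌋ by have := mt mem_iff.2 h; omega]
    simp

theorem indicator_cutAndProject {ξ a b : ℝ} (hab : a ≤ b) (hb : b < a + 1) :
    (cutAndProject ξ a b).indicator (1 : ℤ → ℝ) =
      (fun t : ℤ => (icoShiftCount a b (ξ * t) : ℝ)) +
        {t : ℤ | ∃ y : ℤ, ξ * t - y = b}.indicator 1 := by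
  have disjoint : Disjoint {t : ℤ | ∃ y : ℤ, ξ * t - y ∈ Ico a b}
      {t : ℤ | ∃ y : ℤ, ξ * t - y = b} := by
    rw [Set.disjoint_left]
    rintro t ⟨y, hay, hyb⟩ ⟨z, hz⟩
    have lower : z < y := by exact_mod_cast (by linarith : (z : ℝ) < y)
    have upper : y < z + 1 := by exact_mod_cast (by linarith : (y : ℝ) < z + 1)
    omega
  have union : cutAndProject ξ a b =
      {t : ℤ | ∃ y : ℤ, ξ * t - y ∈ Ico a b} ∪ {t : ℤ | ∃ y : ℤ, ξ * t - y = b} := by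
    ext t
    simp only [cutAndProject, mem_union, mem_ofPred_eq, ← exists_or, ← mem_Icc,
      ← Ico_union_right hab, mem_singleton_iff]
  rw [union, indicator_union_of_disjoint disjoint]
  simp only [icoShiftCount_eq_indicator hab hb]
  rfl

theorem subsingleton_setOf_exists_mul_sub_eq {ξ : ℝ} (hξ : Irrational ξ) (b : ℝ) :
    {t : ℤ | ∃ y : ℤ, ξ * t - y = b}.Subsingleton := by
  rintro s ⟨y, hy⟩ t ⟨z, hz⟩
  by_contra hne
  refine (hξ.mul_intCast (sub_ne_zero.2 hne)).ne_int (y - z) ?_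
  push_cast
  linarith

theorem birkhoffSum_add_one_indicator_one (Q : Set ℤ) (n : ℕ) (s : ℤ) :
    birkhoffSum (· + 1) (Q.indicator (1 : ℤ → ℝ)) n s = (Q ∩ Ico s (s + n)).ncard := by
  induction n with
  | zero => simp
  | succ n ih =>
    have interval : Ico s (s + (n + 1 : ℕ)) = insert (s + n) (Ico s (s + n)) := by
      ext t
      simp only [mem_Ico, mem_insert_iff]
      omega
    rw [birkhoffSum_succ, ih, interval, add_right_iterate, nsmul_one]
    by_cases h : s + n ∈ Q
    · rw [inter_insert_of_mem h,
        ncard_insert_of_notMem (by simp) ((finite_Ico _ _).inter_of_right _)]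
      simp [h]
    · rw [inter_insert_of_notMem h]
      simp [h]

theorem hasBoundedBirkhoffSums_indicator_of_finite {Q : Set ℤ} (hQ : Q.Finite) :
    HasBoundedBirkhoffSums (· + 1) (Q.indicator (1 : ℤ → ℝ)) := by
  refine ⟨Q.ncard, fun n s => ?_⟩
  rw [birkhoffSum_add_one_indicator_one, Nat.abs_cast]
  exact_mod_cast ncard_le_ncard inter_subset_left hQ

theorem hasBoundedBirkhoffSums_cutAndProject_iff {ξ a b : ℝ} (hξ : Irrational ξ)
    (hab : a ≤ b) (hb : b < a + 1) (c : ℝ) :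
    HasBoundedBirkhoffSums (· + 1)
        (fun t => (cutAndProject ξ a b).indicator (1 : ℤ → ℝ) t - c) ↔
      c = b - a ∧ ∃ k m : ℤ, b - a = k * ξ + m := by
  set boundary := {t : ℤ | ∃ y : ℤ, ξ * t - y = b}
  have boundary_bounded : HasBoundedBirkhoffSums (· + 1) (boundary.indicator (1 : ℤ → ℝ)) :=
    hasBoundedBirkhoffSums_indicator_of_finite
      (subsingleton_setOf_exists_mul_sub_eq hξ b).finite
  have split : (fun t => (cutAndProject ξ a b).indicator (1 : ℤ → ℝ) t - c) =
      (fun t : ℤ => (icoShiftCount a b (ξ * t) - c : ℝ)) + boundary.indicator 1 := by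
    ext t
    rw [indicator_cutAndProject hab hb, Pi.add_apply, Pi.add_apply, add_sub_right_comm]
  rw [split, boundary_bounded.add_iff,
    hasBoundedBirkhoffSums_comp_mul_iff (f := fun y => icoShiftCount a b y - c) hξ
      (fun y => by simp only [periodic_icoShiftCount a b y])
      (continuousWithinAt_icoShiftCount_sub a b c),
    hasBoundedBirkhoffSums_icoShiftCount_sub_iff]

/-! ### Bounded displacement -/

theorem bdEquiv_range_iff {X Y : Type*} {f : X → ℝ} {g : Y → ℝ} (hf : Injective f)
    (hg : Injective g) :
    BDEquiv (range f) (range g) ↔ ∃ e : X ≃ Y, ∃ M, ∀ x, |f x - g (e x)| ≤ M := by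
  constructor
  · rintro ⟨φ, M, hM⟩
    refine ⟨(Equiv.ofInjective f hf).trans (φ.trans (Equiv.ofInjective g hg).symm), M,
      fun x => ?_⟩
    simpa [Equiv.apply_ofInjective_symm] using hM (Equiv.ofInjective f hf x)
  · rintro ⟨e, M, hM⟩
    refine ⟨(Equiv.ofInjective f hf).symm.trans (e.trans (Equiv.ofInjective g hg)), M, ?_⟩
    rintro ⟨_, x, rfl⟩
    simpa using hM x

theorem preimage_Ico_subset_of_abs_sub_lt {X Y : Type*} {f : X → ℝ} {g : Y → ℝ} {e : X → Y}
    {M : ℝ} (he : ∀ x, |f x - g (e x)| < M) (u v : ℝ) :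
    f ⁻¹' Ico u v ⊆ e ⁻¹' (g ⁻¹' Ico (u - M) (v + M)) := fun x ⟨hu, hv⟩ => by
  obtain ⟨lower, upper⟩ := abs_lt.1 (he x)
  exact ⟨by linarith, by linarith⟩

theorem preimage_mul_intCast_Ico {α : ℝ} (hα : 0 < α) (u v : ℝ) :
    (fun n : ℤ => α * n) ⁻¹' Ico u v = Ico ⌈u / α⌉ ⌈v / α⌉ := by
  ext n
  simp only [mem_preimage, mem_Ico, Int.ceil_le, Int.lt_ceil, div_le_iff₀' hα, lt_div_iff₀' hα]

theorem le_ncard_preimage_mul_intCast_Ico {α : ℝ} (hα : 0 < α) (u v : ℝ) :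
    (v - u) / α - 1 ≤ ((fun n : ℤ => α * n) ⁻¹' Ico u v).ncard := by
  have card : (⌈v / α⌉ - ⌈u / α⌉ : ℝ) ≤ ((⌈v / α⌉ - ⌈u / α⌉).toNat : ℝ) := by
    exact_mod_cast Int.self_le_toNat _
  rw [preimage_mul_intCast_Ico hα, ← Finset.coe_Ico, ncard_coe_finset, Int.card_Ico, sub_div]
  linarith [Int.le_ceil (v / α), Int.ceil_lt_add_one (u / α)]

theorem ncard_preimage_mul_intCast_Ico_le {α : ℝ} (hα : 0 < α) {u v : ℝ} (huv : u ≤ v) :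
    ((fun n : ℤ => α * n) ⁻¹' Ico u v).ncard ≤ (v - u) / α + 1 := by
  have ceil_mono : ⌈u / α⌉ ≤ ⌈v / α⌉ := Int.ceil_mono (by gcongr)
  have card : ((⌈v / α⌉ - ⌈u / α⌉).toNat : ℝ) = ⌈v / α⌉ - ⌈u / α⌉ := by
    exact_mod_cast Int.toNat_of_nonneg (sub_nonneg.2 ceil_mono)
  rw [preimage_mul_intCast_Ico hα, ← Finset.coe_Ico, ncard_coe_finset, Int.card_Ico, sub_div, card]
  linarith [Int.le_ceil (u / α), Int.ceil_lt_add_one (v / α)]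

theorem abs_ncard_preimage_Ico_sub_le_of_equiv {X : Type*} {f : X → ℝ} {α M : ℝ} (hα : 0 < α)
    (e : X ≃ ℤ) (he : ∀ x, |f x - α * e x| < M) {u v : ℝ} (huv : u ≤ v) :
    |((f ⁻¹' Ico u v).ncard : ℝ) - (v - u) / α| ≤ 2 * M / α + 1 := by
  set g : ℤ → ℝ := fun n => α * n
  have M_pos : 0 < M := (abs_nonneg _).trans_lt (he (e.symm 0))
  have f_subset : f ⁻¹' Ico u v ⊆ e ⁻¹' (g ⁻¹' Ico (u - M) (v + M)) :=
    preimage_Ico_subset_of_abs_sub_lt he u v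
  have g_subset : g ⁻¹' Ico (u + M) (v - M) ⊆ e.symm ⁻¹' (f ⁻¹' Ico u v) := by
    have he_symm (n : ℤ) : |g n - f (e.symm n)| < M := by
      simpa only [abs_sub_comm, e.apply_symm_apply] using he (e.symm n)
    have subset := preimage_Ico_subset_of_abs_sub_lt he_symm (u + M) (v - M)
    rwa [add_sub_cancel_right, sub_add_cancel] at subset
  have g_finite : (g ⁻¹' Ico (u - M) (v + M)).Finite := by
    rw [preimage_mul_intCast_Ico hα]
    exact finite_Ico _ _
  have f_finite : (f ⁻¹' Ico u v).Finite :=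
    (g_finite.preimage e.injective.injOn).subset f_subset
  have upper : ((f ⁻¹' Ico u v).ncard : ℝ) ≤ (v + M - (u - M)) / α + 1 :=
    (Nat.cast_le.2 (ncard_le_ncard_of_injOn e f_subset e.injective.injOn g_finite)).trans
      (ncard_preimage_mul_intCast_Ico_le hα (by linarith))
  have lower : (v - M - (u + M)) / α - 1 ≤ (f ⁻¹' Ico u v).ncard :=
    (le_ncard_preimage_mul_intCast_Ico hα (u + M) (v - M)).trans
      (Nat.cast_le.2 (ncard_le_ncard_of_injOn e.symm g_subset e.symm.injective.injOn f_finite))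
  rw [abs_le]
  constructor
  · linear_combination lower
  · linear_combination upper

theorem image_val_preimage_intCast_Ico (Q : Set ℤ) (s t : ℤ) :
    Subtype.val '' ((fun q : Q => ((q : ℤ) : ℝ)) ⁻¹' Ico (s : ℝ) t) = Q ∩ Ico s t := by
  ext q
  simp [and_comm, and_assoc]

theorem hasBoundedBirkhoffSums_indicator_sub_of_equiv {Q : Set ℤ} {α M : ℝ} (hα : 0 < α)
    (e : Q ≃ ℤ) (he : ∀ t : Q, |((t : ℤ) : ℝ) - α * e t| ≤ M) :
    HasBoundedBirkhoffSums (· + 1) fun t => Q.indicator (1 : ℤ → ℝ) t - α⁻¹ := by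
  refine ⟨2 * (M + 1) / α + 1, fun n s => ?_⟩
  have count : birkhoffSum (· + 1) (Q.indicator (1 : ℤ → ℝ)) n s =
      ((fun q : Q => ((q : ℤ) : ℝ)) ⁻¹' Ico (s : ℝ) (s + n : ℤ)).ncard := by
    rw [birkhoffSum_add_one_indicator_one, ← image_val_preimage_intCast_Ico,
      ncard_image_of_injective _ Subtype.val_injective]
  have mean : birkhoffSum (· + 1) (fun t => Q.indicator (1 : ℤ → ℝ) t - α⁻¹) n s =
      birkhoffSum (· + 1) (Q.indicator (1 : ℤ → ℝ)) n s - ((s + n : ℤ) - s) / α := by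
    simp [birkhoffSum, div_eq_mul_inv]
  rw [mean, count]
  exact abs_ncard_preimage_Ico_sub_le_of_equiv hα e (fun q => (he q).trans_lt (lt_add_one M))
    (Int.cast_le.2 (by omega))

theorem exists_equiv_int_of_add_one_eq {Q : Set ℤ} {N : ℤ → ℤ}
    (hN : ∀ t, N (t + 1) = N t + Q.indicator 1 t) (above : ¬BddAbove (range N))
    (below : ¬BddBelow (range N)) : ∃ e : Q ≃ ℤ, ∀ t, e t = N t := by
  have succ_of_mem {t : ℤ} (ht : t ∈ Q) : N (t + 1) = N t + 1 := by
    rw [hN, indicator_of_mem ht, Pi.one_apply]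
  have N_mono : Monotone N := monotone_int_of_le_succ fun t => by
    rw [hN]
    exact le_add_of_nonneg_right (indicator_nonneg (fun _ _ => zero_le_one) t)
  have N_strictMono : StrictMono fun t : Q => N t := fun s t hst =>
    (lt_add_one (N s)).trans_le <| succ_of_mem s.2 ▸ N_mono (Int.add_one_le_of_lt hst)
  have N_surjective : Surjective fun t : Q => N t := fun n => by
    obtain ⟨_, ⟨u, rfl⟩, hu⟩ := not_bddAbove_iff.1 above n
    obtain ⟨_, ⟨l, rfl⟩, hl⟩ := not_bddBelow_iff.1 below n
    obtain ⟨t, ht, ht_max⟩ := Int.exists_greatest_of_bdd (P := fun t => N t ≤ n)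
      ⟨u, fun z hz => (N_mono.reflect_lt (hz.trans_lt hu)).le⟩ ⟨l, hl.le⟩
    have jump : n < N (t + 1) := not_le.1 fun h => (lt_add_one t).not_ge (ht_max _ h)
    have htQ : t ∈ Q := by
      by_contra htQ
      rw [hN, indicator_of_notMem htQ, add_zero] at jump
      exact ht.not_gt jump
    refine ⟨⟨t, htQ⟩, ht.antisymm ?_⟩
    rwa [succ_of_mem htQ, Int.lt_add_one_iff] at jump
  exact ⟨Equiv.ofBijective _ ⟨N_strictMono.injective, N_surjective⟩, fun t => rfl⟩

theorem exists_equiv_of_hasBoundedBirkhoffSums_indicator_sub {Q : Set ℤ} {α : ℝ} (hα : 0 < α)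
    (hQ : HasBoundedBirkhoffSums (· + 1) fun t => Q.indicator (1 : ℤ → ℝ) t - α⁻¹) :
    ∃ e : Q ≃ ℤ, ∃ M, ∀ t : Q, |((t : ℤ) : ℝ) - α * e t| ≤ M := by
  obtain ⟨h, ⟨B, hB⟩, h_add_one⟩ := hasBoundedBirkhoffSums_iff_exists_transfer.1 hQ
  set N : ℤ → ℤ := fun t => ⌊h t + t / α⌋
  have N_add_one (t : ℤ) : N (t + 1) = N t + Q.indicator 1 t := by
    have shift : h (t + 1) + (t + 1 : ℤ) / α = h t + t / α + (Q.indicator 1 t : ℤ) := by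
      have cast : ((Q.indicator 1 t : ℤ) : ℝ) = Q.indicator 1 t := by
        by_cases ht : t ∈ Q <;> simp [ht]
      rw [cast]
      push_cast
      linear_combination h_add_one t
    rw [show N (t + 1) = ⌊_⌋ from rfl, shift, Int.floor_add_intCast]
  have N_near (t : ℤ) : |t - α * N t| ≤ α * (B + 1) := by
    have floor_near : |t / α - N t| ≤ B + 1 := by
      obtain ⟨h_ge, h_le⟩ := abs_le.1 (hB t)
      rw [abs_le]
      constructor <;> linarith [Int.floor_le (h t + t / α), Int.lt_floor_add_one (h t + t / α)]
    calc |t - α * N t| = α * |t / α - N t| := by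
          rw [← abs_of_pos hα, ← abs_mul, abs_of_pos hα, mul_sub, mul_div_cancel₀ _ hα.ne']
      _ ≤ α * (B + 1) := by gcongr
  have N_above : ¬BddAbove (range N) := not_bddAbove_iff.2 fun n => by
    obtain ⟨t, ht⟩ := exists_int_gt (α * n + α * (B + 1))
    refine ⟨N t, mem_range_self t, Int.cast_lt.1 (lt_of_mul_lt_mul_left ?_ hα.le)⟩
    linarith [(abs_le.1 (N_near t)).2]
  have N_below : ¬BddBelow (range N) := not_bddBelow_iff.2 fun n => by
    obtain ⟨t, ht⟩ := exists_int_lt (α * n - α * (B + 1))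
    refine ⟨N t, mem_range_self t, Int.cast_lt.1 (lt_of_mul_lt_mul_left ?_ hα.le)⟩
    linarith [(abs_le.1 (N_near t)).1]
  obtain ⟨e, he⟩ := exists_equiv_int_of_add_one_eq N_add_one N_above N_below
  exact ⟨e, α * (B + 1), fun t => by simpa only [he] using N_near t⟩

theorem bdEquiv_image_intCast_iff {α : ℝ} (hα : 0 < α) (Q : Set ℤ) :
    BDEquiv ((fun t : ℤ => (t : ℝ)) '' Q) {x : ℝ | ∃ n : ℤ, x = α * n} ↔
      HasBoundedBirkhoffSums (· + 1) fun t => Q.indicator (1 : ℤ → ℝ) t - α⁻¹ := by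
  have lattice : {x : ℝ | ∃ n : ℤ, x = α * n} = range fun n : ℤ => α * n := by
    simp only [range, eq_comm]
  have coe_injective : Injective fun t : Q => ((t : ℤ) : ℝ) :=
    Int.cast_injective.comp Subtype.val_injective
  have mul_injective : Injective fun n : ℤ => α * n :=
    (mul_right_injective₀ hα.ne').comp Int.cast_injective
  rw [image_eq_range, lattice, bdEquiv_range_iff coe_injective mul_injective]
  constructor
  · rintro ⟨e, M, he⟩
    exact hasBoundedBirkhoffSums_indicator_sub_of_equiv hα e he
  · exact exists_equiv_of_hasBoundedBirkhoffSums_indicator_sub hα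

/-- Theorem 3 of the paper (Kesten's theorem reformulated): the cut-and-project
set obtained from the irrational strip `a ≤ ξt − y ≤ b` is BD-equivalent to a
lattice in ℝ if and only if the boundary lines of the strip are equivalent
mod ℤ², i.e. `b − a ∈ ℤ + ℤξ`. -/
theorem cut_and_project_BD_lattice_iff (ξ a b : ℝ) (hξ : Irrational ξ)
    (hab : a < b) (hb : b < a + 1) :
    (∃ α : ℝ, 0 < α ∧
        BDEquiv ((fun t : ℤ => (t : ℝ)) ''
            {t : ℤ | ∃ y : ℤ, a ≤ ξ * t - y ∧ ξ * t - y ≤ b})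
          {x : ℝ | ∃ n : ℤ, x = α * n}) ↔
      ∃ k m : ℤ, b - a = k * ξ + m := by
  have bdEquiv_iff {α : ℝ} (hα : 0 < α) :
      BDEquiv ((fun t : ℤ => (t : ℝ)) '' cutAndProject ξ a b) {x : ℝ | ∃ n : ℤ, x = α * n} ↔
        α⁻¹ = b - a ∧ ∃ k m : ℤ, b - a = k * ξ + m := by
    rw [bdEquiv_image_intCast_iff hα, hasBoundedBirkhoffSums_cutAndProject_iff hξ hab.le hb]
  constructor
  · rintro ⟨α, hα, h⟩
    exact ((bdEquiv_iff hα).1 h).2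
  · intro h
    have hα : 0 < (b - a)⁻¹ := inv_pos.2 (sub_pos.2 hab)
    exact ⟨(b - a)⁻¹, hα, (bdEquiv_iff hα).2 ⟨inv_inv _, h⟩⟩
end

section
/- Let ξ be irrational and let I = [a, b) ⊂ [0,1) with b − a ∉ ℤ + ℤξ. Then the function N ↦ #{1 ≤ n ≤ N : frac(nξ) ∈ I} − N(b−a) is unbounded. -/
open scoped Classical

/-!
Rotate the circle by `ξ` and let `g = 1_I - (b - a)`. If the Birkhoff sums of `g` are bounded
along one orbit, then they are bounded almost everywhere, because orbits are dense and `g` is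
continuous almost everywhere. Their limsup `h` is then finite almost everywhere and satisfies
`g t = h t - h (t + ξ)`. Since `1_I` takes integer values, `h` modulo `1` intertwines the rotation
by `ξ` with the rotation by `b - a`, so `exp (2πi (b - a))` is an eigenvalue of the rotation by `ξ`.
By Fourier analysis these eigenvalues are the numbers `exp (2πi k ξ)` with `k` an integer.
-/

open Filter Topology MeasureTheory AddCircle
open scoped Finset

section BirkhoffSum

theorem continuousAt_birkhoffSum {X M : Type*} [TopologicalSpace X] [TopologicalSpace M]
    [AddCommMonoid M] [ContinuousAdd M] {T : X → X} {g : X → M} {x : X} (hT : Continuous T)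
    (hg : ∀ k, ContinuousAt g (T^[k] x)) (n : ℕ) : ContinuousAt (birkhoffSum T g n) x :=
  tendsto_finsetSum _ fun k _ ↦ (hg k).comp (hT.iterate k).continuousAt

theorem norm_birkhoffSum_iterate_le {X E : Type*} [SeminormedAddCommGroup E] {T : X → X} {g : X → E}
    {x : X} {C : ℝ} (hC : ∀ n, ‖birkhoffSum T g n x‖ ≤ C) (n k : ℕ) :
    ‖birkhoffSum T g n (T^[k] x)‖ ≤ C + C := by
  rw [← add_sub_cancel_left (birkhoffSum T g k x) (birkhoffSum T g n (T^[k] x)),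
    ← birkhoffSum_add]
  exact norm_sub_le_of_le (hC _) (hC _)

theorem norm_birkhoffSum_le_of_denseRange {X E : Type*} [TopologicalSpace X]
    [SeminormedAddCommGroup E] {T : X → X} {g : X → E} {x y : X} {C : ℝ}
    (hx : DenseRange fun k ↦ T^[k] x) (hC : ∀ n, ‖birkhoffSum T g n x‖ ≤ C) {n : ℕ}
    (hy : ContinuousAt (birkhoffSum T g n) y) : ‖birkhoffSum T g n y‖ ≤ C + C := by
  have hclosure := mem_closure_image hy (hx y)
  have hball : birkhoffSum T g n '' (Set.range fun k ↦ T^[k] x) ⊆ Metric.closedBall 0 (C + C) := by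
    rintro _ ⟨_, ⟨k, rfl⟩, rfl⟩
    exact mem_closedBall_zero_iff.2 (norm_birkhoffSum_iterate_le hC n k)
  exact mem_closedBall_zero_iff.1 (closure_minimal hball Metric.isClosed_closedBall hclosure)

theorem ae_norm_birkhoffSum_le_of_denseRange {X E : Type*} [TopologicalSpace X] [MeasurableSpace X]
    {μ : Measure X} [SeminormedAddCommGroup E] {T : X → X} {g : X → E} {x : X} {C : ℝ}
    (hT : Continuous T) (hμ : Measure.QuasiMeasurePreserving T μ μ)
    (hg : ∀ᵐ y ∂μ, ContinuousAt g y) (hx : DenseRange fun k ↦ T^[k] x)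
    (hC : ∀ n, ‖birkhoffSum T g n x‖ ≤ C) :
    ∀ᵐ y ∂μ, ∀ n, ‖birkhoffSum T g n y‖ ≤ C + C := by
  have hcont : ∀ᵐ y ∂μ, ∀ k, ContinuousAt g (T^[k] y) :=
    ae_all_iff.2 fun k ↦ (hμ.iterate k).ae hg
  filter_upwards [hcont] with y hy n
  exact norm_birkhoffSum_le_of_denseRange hx hC (continuousAt_birkhoffSum hT hy n)

theorem limsup_birkhoffSum_eq_add {X : Type*} {T : X → X} {g : X → ℝ} {x : X} {C : ℝ}
    (hC : ∀ n, ‖birkhoffSum T g n x‖ ≤ C) :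
    limsup (birkhoffSum T g · x) atTop = g x + limsup (birkhoffSum T g · (T x)) atTop := by
  have hCT (n : ℕ) : |birkhoffSum T g n (T x)| ≤ C + C := norm_birkhoffSum_iterate_le hC n 1
  have hle : IsBoundedUnder (· ≤ ·) atTop (birkhoffSum T g · (T x)) :=
    isBoundedUnder_of ⟨C + C, fun n ↦ (abs_le.1 (hCT n)).2⟩
  have hge : IsBoundedUnder (· ≥ ·) atTop (birkhoffSum T g · (T x)) :=
    isBoundedUnder_of ⟨-(C + C), fun n ↦ (abs_le.1 (hCT n)).1⟩
  rw [← limsup_nat_add _ 1]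
  simp only [birkhoffSum_succ']
  exact limsup_const_add atTop _ _ hle hge.isCoboundedUnder_le

variable {X : Type*} [MeasurableSpace X] {μ : Measure X} {T : X → X} {g : X → ℝ}

theorem measurable_birkhoffSum_s10 (hT : Measurable T) (hg : Measurable g) (n : ℕ) :
    Measurable (birkhoffSum T g n) :=
  Finset.measurable_fun_sum _ fun k _ ↦ hg.comp (hT.iterate k)

theorem aemeasurable_limsup_birkhoffSum (hT : Measure.QuasiMeasurePreserving T μ μ)
    (hg : AEMeasurable g μ) : AEMeasurable (fun x ↦ limsup (birkhoffSum T g · x) atTop) μ := by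
  refine ⟨_, Measurable.limsup (measurable_birkhoffSum_s10 hT.measurable hg.measurable_mk), ?_⟩
  have hmk := ae_all_iff.2 (hT.birkhoffSum_ae_eq_of_ae_eq hg.ae_eq_mk)
  filter_upwards [hmk] with x hx
  exact congrArg (limsup · atTop) (funext hx)

theorem exists_ae_eq_sub_comp_of_birkhoffSum_bounded (hT : Measure.QuasiMeasurePreserving T μ μ)
    (hg : AEMeasurable g μ) (hbdd : ∀ᵐ x ∂μ, ∃ C, ∀ n, ‖birkhoffSum T g n x‖ ≤ C) :
    ∃ h : X → ℝ, AEMeasurable h μ ∧ ∀ᵐ x ∂μ, g x = h x - h (T x) := by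
  refine ⟨_, aemeasurable_limsup_birkhoffSum hT hg, ?_⟩
  filter_upwards [hbdd] with x ⟨C, hC⟩
  exact eq_sub_of_add_eq (limsup_birkhoffSum_eq_add hC).symm

end BirkhoffSum

section Eigenvalues

variable {p : ℝ} [Fact (0 < p)]

theorem exists_fourierCoeff_ne_zero {F : AddCircle p → ℂ} (hF : MemLp F 2 haarAddCircle)
    (hne : ¬F =ᵐ[haarAddCircle] 0) : ∃ k, fourierCoeff F k ≠ 0 := by
  contrapose! hne
  have hzero : hF.toLp F = 0 := by
    refine fourierBasis.repr.injective (lp.ext (funext fun k ↦ ?_))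
    rw [fourierBasis_repr, fourierCoeff_congr_ae hF.coeFn_toLp, hne, map_zero]
    rfl
  exact (MemLp.toLp_eq_toLp_iff hF MemLp.zero).1 (hzero.trans (MemLp.toLp_zero _).symm)

theorem fourierCoeff_comp_add_right (F : AddCircle p → ℂ) (α : AddCircle p) (k : ℤ) :
    fourierCoeff (fun t ↦ F (t + α)) k = fourier k α * fourierCoeff F k := by
  have hchar (t : AddCircle p) : fourier (-k) t = fourier k α * fourier (-k) (t + α) := by
    simp only [fourier_apply, ← Circle.coe_mul, ← toCircle_add]
    congr 2
    module
  calc fourierCoeff (fun t ↦ F (t + α)) k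
      = ∫ t, fourier k α * (fourier (-k) (t + α) • F (t + α)) ∂haarAddCircle := by
        refine integral_congr_ae (.of_forall fun t ↦ ?_)
        simp only [hchar t, smul_eq_mul, mul_assoc]
    _ = fourier k α * fourierCoeff F k := by
        rw [integral_const_mul, integral_add_right_eq_self fun t ↦ fourier (-k) t • F t,
          fourierCoeff]

theorem exists_eq_fourier_of_ae_comp_add_right_eq_mul {F : AddCircle p → ℂ} {α : AddCircle p}
    {c : ℂ} (hF : MemLp F 2 haarAddCircle) (hne : ¬F =ᵐ[haarAddCircle] 0)
    (heigen : (fun t ↦ F (t + α)) =ᵐ[haarAddCircle] fun t ↦ c * F t) : ∃ k, c = fourier k α := by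
  obtain ⟨k, hk⟩ := exists_fourierCoeff_ne_zero hF hne
  refine ⟨k, mul_right_cancel₀ hk ?_⟩
  rw [← fourierCoeff_comp_add_right, ← fourierCoeff.const_mul, fourierCoeff_congr_ae heigen]

theorem mem_zmultiples_of_ae_comp_add_right_eq_add {u : AddCircle p → AddCircle p}
    {α γ : AddCircle p} (hu : AEMeasurable u haarAddCircle)
    (hadd : ∀ᵐ t ∂haarAddCircle, u (t + α) = u t + γ) : γ ∈ AddSubgroup.zmultiples α := by
  let F : AddCircle p → ℂ := fun t ↦ toCircle (u t)
  have hF : MemLp F 2 haarAddCircle :=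
    .of_bound (C := 1) (by fun_prop) (.of_forall fun t ↦ (Circle.norm_coe _).le)
  have hne : ¬F =ᵐ[haarAddCircle] 0 := fun hzero ↦
    let ⟨t, ht⟩ := hzero.exists
    Circle.coe_ne_zero _ ht
  have heigen : (fun t ↦ F (t + α)) =ᵐ[haarAddCircle] fun t ↦ toCircle γ * F t := by
    filter_upwards [hadd] with t ht
    simp only [F, ht, toCircle_add, Circle.coe_mul, mul_comm]
  obtain ⟨k, hk⟩ := exists_eq_fourier_of_ae_comp_add_right_eq_mul hF hne heigen
  rw [fourier_apply] at hk
  exact ⟨k, (injective_toCircle (Fact.out : 0 < p).ne' (Circle.ext hk)).symm⟩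

theorem coe_mem_zmultiples_of_ae_intCast_sub_eq {h : UnitAddCircle → ℝ} {α : UnitAddCircle} {c : ℝ}
    (hh : AEMeasurable h haarAddCircle)
    (hc : ∀ᵐ t ∂haarAddCircle, ∃ m : ℤ, m - c = h t - h (t + α)) :
    (c : UnitAddCircle) ∈ AddSubgroup.zmultiples α := by
  refine mem_zmultiples_of_ae_comp_add_right_eq_add (u := fun t ↦ (h t : UnitAddCircle))
    (AddCircle.measurable_mk'.comp_aemeasurable hh) ?_
  filter_upwards [hc] with t ⟨m, hm⟩
  rw [← AddCircle.coe_add, ← sub_eq_zero, ← AddCircle.coe_sub, coe_eq_zero_iff]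
  exact ⟨-m, by rw [zsmul_one]; push_cast; linarith⟩

end Eigenvalues

section Circle

theorem coe_mem_zmultiples_coe_iff {ξ c : ℝ} :
    (c : UnitAddCircle) ∈ AddSubgroup.zmultiples (ξ : UnitAddCircle) ↔
      ∃ k m : ℤ, c = k * ξ + m := by
  refine exists_congr fun k ↦ ?_
  change k • (ξ : UnitAddCircle) = c ↔ _
  rw [eq_comm, ← coe_zsmul, ← sub_eq_zero, ← coe_sub, coe_eq_zero_iff]
  refine exists_congr fun m ↦ ?_
  rw [zsmul_one, zsmul_eq_mul, eq_sub_iff_add_eq', eq_comm]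

theorem coe_mem_image_coe_iff_fract_mem {s : Set ℝ} (hs : s ⊆ Set.Ico 0 1) {x : ℝ} :
    (x : UnitAddCircle) ∈ ((↑) '' s : Set UnitAddCircle) ↔ Int.fract x ∈ s := by
  refine ⟨?_, fun hx ↦ ⟨_, hx, coe_fract x⟩⟩
  rintro ⟨y, hy, hyx⟩
  have hy_Ico : y ∈ Set.Ico (0 : ℝ) (0 + 1) := by simpa using hs hy
  have hx_Ico : Int.fract x ∈ Set.Ico (0 : ℝ) (0 + 1) := by
    simp [Int.fract_nonneg, Int.fract_lt_one]
  rw [← coe_fract x, coe_eq_coe_iff_of_mem_Ico hy_Ico hx_Ico] at hyx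
  rwa [← hyx]

theorem frontier_image_coe_Ico_subset (p a b : ℝ) :
    frontier ((↑) '' Set.Ico a b : Set (AddCircle p)) ⊆ {(a : AddCircle p), (b : AddCircle p)} := by
  have hclosed : IsClosed ((↑) '' Set.Icc a b : Set (AddCircle p)) :=
    (isCompact_Icc.image (AddCircle.continuous_mk' p)).isClosed
  have hopen : IsOpen ((↑) '' Set.Ioo a b : Set (AddCircle p)) :=
    QuotientAddGroup.isOpenMap_coe _ isOpen_Ioo
  rintro _ ⟨hclosure, hinterior⟩
  obtain ⟨y, hy, rfl⟩ := closure_minimal (Set.image_mono Set.Ico_subset_Icc_self) hclosed hclosure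
  have hy_Ioo : y ∉ Set.Ioo a b := fun h ↦
    hinterior (interior_maximal (Set.image_mono Set.Ioo_subset_Ico_self) hopen ⟨y, h, rfl⟩)
  have hy_pair : y ∈ ({a, b} : Set ℝ) := by
    rw [← Set.Icc_sdiff_Ioo_same (hy.1.trans hy.2)]
    exact ⟨hy, hy_Ioo⟩
  rw [← Set.image_pair]
  exact Set.mem_image_of_mem _ hy_pair

variable {p : ℝ} [Fact (0 < p)]

theorem volume_singleton_addCircle (x : AddCircle p) : volume {x} = 0 := by
  simpa [(Fact.out : 0 < p).le] using volume_closedBall p (x := x) 0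

theorem volume_frontier_image_coe_Ico (a b : ℝ) :
    volume (frontier ((↑) '' Set.Ico a b : Set (AddCircle p))) = 0 :=
  measure_mono_null (frontier_image_coe_Ico_subset p a b) <|
    measure_union_null (volume_singleton_addCircle _) (volume_singleton_addCircle _)

theorem denseRange_nsmul_coe {ξ : ℝ} (hξ : Irrational ξ) :
    DenseRange (· • (ξ : UnitAddCircle) : ℕ → UnitAddCircle) :=
  denseRange_zsmul_iff_nsmul.1 (denseRange_zsmul_coe_iff.2 (by rwa [div_one]))

theorem denseRange_iterate_add_right {G : Type*} [AddGroup G] [TopologicalSpace G]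
    [ContinuousAdd G] {α : G} (hα : DenseRange (· • α : ℕ → G)) (x : G) :
    DenseRange fun k ↦ (· + α)^[k] x := by
  simp only [add_right_iterate]
  exact (add_left_surjective x).denseRange.comp hα (continuous_const_add x)

end Circle

section Counting

theorem birkhoffSum_indicator_sub_const {G : Type*} [AddMonoid G] (E : Set G) (c : ℝ) (x α : G)
    (N : ℕ) : birkhoffSum (· + α) (fun y ↦ E.indicator 1 y - c) N x =
      #{n ∈ Finset.range N | x + n • α ∈ E} - N * c := by
  simp [birkhoffSum, Set.indicator_apply]

theorem ae_continuousAt_indicator_sub_const {X : Type*} [TopologicalSpace X] [MeasurableSpace X]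
    {μ : Measure X} {E : Set X} (hE : μ (frontier E) = 0) (c : ℝ) :
    ∀ᵐ y ∂μ, ContinuousAt (fun y ↦ E.indicator 1 y - c) y := by
  filter_upwards [measure_eq_zero_iff_ae_notMem.1 hE] with y hy
  exact (continuousOn_const.continuousAt_indicator hy).sub continuousAt_const

theorem kesten_orbit_zero_unbounded_general {ξ c : ℝ} (hξ : Irrational ξ)
    (hc : ¬∃ k m : ℤ, c = k * ξ + m) {E : Set UnitAddCircle} (hE : volume (frontier E) = 0)
    (x : UnitAddCircle) :
    ¬∃ C : ℝ, ∀ N : ℕ,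
      |(#{n ∈ Finset.range N | x + n • (ξ : UnitAddCircle) ∈ E} : ℝ) - N * c| ≤ C := by
  rintro ⟨C, hC⟩
  let g : UnitAddCircle → ℝ := fun y ↦ E.indicator 1 y - c
  have hvol : (volume : Measure UnitAddCircle) = haarAddCircle := by
    simp [volume_eq_smul_haarAddCircle]
  rw [hvol] at hE
  have hT := (measurePreserving_add_right haarAddCircle (ξ : UnitAddCircle)).quasiMeasurePreserving
  have hg : AEMeasurable g haarAddCircle :=
    (aemeasurable_const.indicator₀ (nullMeasurableSet_of_null_frontier hE)).sub_const c
  have hx : ∀ N, ‖birkhoffSum (· + (ξ : UnitAddCircle)) g N x‖ ≤ C := fun N ↦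
    (birkhoffSum_indicator_sub_const E c x _ N).symm ▸ hC N
  have hbdd : ∀ᵐ y ∂haarAddCircle, ∀ N, ‖birkhoffSum (· + (ξ : UnitAddCircle)) g N y‖ ≤ C + C :=
    ae_norm_birkhoffSum_le_of_denseRange (continuous_add_const _) hT
      (ae_continuousAt_indicator_sub_const hE c)
      (denseRange_iterate_add_right (denseRange_nsmul_coe hξ) x) hx
  obtain ⟨h, hh, hgh⟩ := exists_ae_eq_sub_comp_of_birkhoffSum_bounded hT hg
    (hbdd.mono fun y hy ↦ ⟨_, hy⟩)
  refine hc (coe_mem_zmultiples_coe_iff.1 (coe_mem_zmultiples_of_ae_intCast_sub_eq hh ?_))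
  filter_upwards [hgh] with y hy
  refine ⟨E.indicator 1 y, Eq.trans ?_ hy⟩
  by_cases hy_mem : y ∈ E <;> simp [g, hy_mem]

theorem card_filter_fract_mul_mem_Ico_eq (ξ a b : ℝ) (ha : 0 ≤ a) (hb : b ≤ 1) (N : ℕ) :
    ((Finset.Icc 1 N).filter (fun n => Int.fract ((n : ℝ) * ξ) ∈ Set.Ico a b)).card =
      #{n ∈ Finset.range N | (ξ : UnitAddCircle) + n • (ξ : UnitAddCircle) ∈
        ((↑) '' Set.Ico a b : Set UnitAddCircle)} := by
  -- The variable `n` of the filter is real, so `Finset.Icc 1 N` is elaborated as the image of the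
  -- natural interval under the cast, written in the monad `Finset`.
  have himage : (do let n ← Finset.Icc 1 N; pure (n : ℝ)) =
      (Finset.range N).image fun n ↦ ((n + 1 : ℕ) : ℝ) := by
    have hIcc : Finset.Icc 1 N = (Finset.range N).image (· + 1) := by
      rw [Finset.range_eq_Ico, Finset.image_add_right_Ico, zero_add,
        Finset.Ico_add_one_right_eq_Icc]
    ext x
    simp [hIcc, eq_comm]
  have hsub : Set.Ico a b ⊆ Set.Ico 0 1 := Set.Ico_subset_Ico ha hb
  have hinj : Function.Injective fun n : ℕ ↦ ((n + 1 : ℕ) : ℝ) :=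
    Nat.cast_injective.comp (add_left_injective 1)
  rw [himage, Finset.filter_image, Finset.card_image_of_injective _ hinj]
  refine congrArg Finset.card (Finset.filter_congr fun n _ ↦ ?_)
  rw [← coe_mem_image_coe_iff_fract_mem hsub, ← nsmul_eq_mul, coe_nsmul, succ_nsmul']

end Counting

/-- Kesten's theorem for the orbit of 0, necessity direction: if the length of
`I = [a,b) ⊆ [0,1)` is not in `ℤ + ℤξ`, then the error term
`#{1 ≤ n ≤ N : frac(nξ) ∈ I} − N(b−a)` is unbounded. -/
theorem kesten_orbit_zero_unbounded (ξ a b : ℝ) (hξ : Irrational ξ)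
    (ha : 0 ≤ a) (hab : a ≤ b) (hb : b ≤ 1)
    (hlen : ¬∃ k m : ℤ, b - a = k * ξ + m) :
    ¬∃ C : ℝ, ∀ N : ℕ,
      |(((Finset.Icc 1 N).filter
          (fun n => Int.fract ((n : ℝ) * ξ) ∈ Set.Ico a b)).card : ℝ)
        - N * (b - a)| ≤ C := by
  simp only [card_filter_fract_mul_mem_Ico_eq ξ a b ha hb]
  exact kesten_orbit_zero_unbounded_general hξ hlen (volume_frontier_image_coe_Ico a b) ξ
end
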